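/- For all nonnegative integers n and b, ∫₀¹ x^(2n) · arccos^(2b+1)(x)/(2b+1)! dx = 4^n/((2n+1)²·C(2n,n)) · Σ_{n < m₁ < ... < m_b} 1/((2m₁+1)² ⋯ (2m_b+1)²), where the empty sum (b = 0) equals 1. -/

import Mathlib

open Real

/-- `∑_{n < m₁ < ⋯ < m_b} 1/((2m₁+1)² ⋯ (2m_b+1)²)`; equals `1` when `b = 0`. -/
noncomputable def tTail (b n : ℕ) : ℝ :=
  ∑' f : {f : Fin b → ℕ // StrictMono f ∧ ∀ i, n < f i},
    ∏ i, 1 / (2 * (f.1 i : ℝ) + 1) ^ 2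

/-!
Substituting `x = cos t` and integrating by parts turns the moments of powers of `arccos`, up to
an explicit factor, into the integrals `M m k = ∫₀^{π/2} cos^m t · t^k / k! dt`. Two further
integrations by parts show that the ratios `A m k = M m k / M m 0` satisfy
`A m (k+2) - A (m+2) (k+2) = A (m+2) k / (m+2)²`. Since `A m (k+2) → 0` as `m → ∞`, this telescopes
to `A m (k+2) = ∑_{j ≥ 1} A (m+2j) k / (m+2j)²`; iterating it unfolds `A m (2b)` into the nested
sum, and `M (2n+1) 0` is Wallis' integral.
-/

open Filter Topology
open scoped Nat

section IncreasingTuple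

variable {α : Type*} [Preorder α]

/-- Strictly increasing `b`-tuples with all entries above `a`: the index set of the nested sums.
For `b = 0` it has exactly one element. -/
abbrev IncreasingTuple (b : ℕ) (a : α) : Type _ :=
  {f : Fin b → α // StrictMono f ∧ ∀ i, a < f i}

namespace IncreasingTuple

theorem strictMono_and_forall_lt_cons_iff {b : ℕ} {a m : α} {f : Fin b → α} :
    (StrictMono (Fin.cons m f : Fin (b + 1) → α) ∧
      ∀ i, a < (Fin.cons m f : Fin (b + 1) → α) i) ↔
      a < m ∧ StrictMono f ∧ ∀ i, m < f i := by
  simp only [StrictMono, Fin.forall_fin_succ, Fin.cons_zero, Fin.cons_succ,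
    Fin.succ_pos, Fin.not_lt_zero, Fin.succ_lt_succ_iff, false_imp_iff, true_imp_iff, true_and]
  exact ⟨fun ⟨⟨hm, hf⟩, ha, _⟩ => ⟨ha, hf, hm⟩, fun ⟨ha, hf, hm⟩ =>
    ⟨⟨hm, hf⟩, ha, fun i => ha.trans (hm i)⟩⟩

/-- An increasing tuple of positive length is its first entry `m` followed by an increasing tuple
above `m`; used to peel off the outermost sum. -/
def consEquiv (b : ℕ) (a : α) :
    (Σ m : Set.Ioi a, IncreasingTuple b (m : α)) ≃ IncreasingTuple (b + 1) a where
  toFun p := ⟨Fin.cons p.1.1 p.2.1, strictMono_and_forall_lt_cons_iff.2 ⟨p.1.2, p.2.2⟩⟩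
  invFun f :=
    have h := strictMono_and_forall_lt_cons_iff.1 ((Fin.cons_self_tail f.1).symm ▸ f.2)
    ⟨⟨f.1 0, h.1⟩, ⟨Fin.tail f.1, h.2⟩⟩
  left_inv _ := rfl
  right_inv f := Subtype.ext (Fin.cons_self_tail f.1)

theorem hasSum_prod_of_hasSum_Ioi {w : α → ℝ} (hw : ∀ m, 0 ≤ w m) {s : ℕ → α → ℝ}
    (s_zero : ∀ a, s 0 a = 1)
    (s_succ : ∀ b a, HasSum (fun m : Set.Ioi a => w m * s b m) (s (b + 1) a)) (b : ℕ) (a : α) :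
    HasSum (fun f : IncreasingTuple b a => ∏ i, w (f.1 i)) (s b a) := by
  induction b generalizing a with
  | zero =>
    let : Unique (IncreasingTuple 0 a) :=
      { default := ⟨Fin.elim0, Subsingleton.strictMono _, fun i => i.elim0⟩
        uniq := fun _ => Subsingleton.elim _ _ }
    simp [s_zero]
  | succ b ih =>
    let F (p : Σ m : Set.Ioi a, IncreasingTuple b (m : α)) : ℝ := w p.1 * ∏ i, w (p.2.1 i)
    have prod_consEquiv :
        (fun f : IncreasingTuple (b + 1) a => ∏ i, w (f.1 i)) ∘ consEquiv b a = F :=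
      funext fun _ => Fin.prod_univ_succ _
    have hasSum_fiber (m : Set.Ioi a) : HasSum (fun f => F ⟨m, f⟩) (w m * s b m) :=
      (ih m).mul_left (w m)
    have F_nonneg (p) : 0 ≤ F p := mul_nonneg (hw _) (Finset.prod_nonneg fun _ _ => hw _)
    have summable_F : Summable F := by
      refine (summable_sigma_of_nonneg F_nonneg).2 ⟨fun m => (hasSum_fiber m).summable, ?_⟩
      simpa only [(hasSum_fiber _).tsum_eq] using (s_succ b a).summable
    rw [← (consEquiv b a).hasSum_iff, prod_consEquiv]
    exact HasSum.sigma_of_hasSum (s_succ b a) hasSum_fiber summable_F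

end IncreasingTuple

end IncreasingTuple

theorem hasSum_Ioi_of_sub_succ_eq {u v : ℕ → ℝ} (hv : ∀ j, 0 ≤ v j)
    (huv : ∀ j, u j - u (j + 1) = v (j + 1)) (hu : Tendsto u atTop (𝓝 0)) (n : ℕ) :
    HasSum (fun m : Set.Ioi n => v m) (u n) := by
  have bijective_shift : Function.Bijective
      fun k : ℕ => (⟨n + k + 1, by simp [add_assoc]⟩ : Set.Ioi n) := by
    refine ⟨fun k l h => ?_, fun ⟨m, hm⟩ => ⟨m - n - 1, ?_⟩⟩
    · simpa using h
    · rw [Set.mem_Ioi] at hm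
      exact Subtype.ext (by dsimp only; omega)
  have sum_range (N : ℕ) : ∑ k ∈ Finset.range N, v (n + k + 1) = u n - u (n + N) := by
    simp only [← huv]
    exact Finset.sum_range_sub' (fun k => u (n + k)) N
  rw [← (Equiv.ofBijective _ bijective_shift).hasSum_iff]
  refine (hasSum_iff_tendsto_nat_of_nonneg (fun k => hv (n + k + 1)) _).2 ?_
  simp only [sum_range]
  have tendsto_shift : Tendsto (fun N => u (n + N)) atTop (𝓝 0) := by
    simpa only [add_comm n] using (tendsto_add_atTop_iff_nat n).2 hu
  simpa only [sub_zero] using tendsto_shift.const_sub (u n)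

theorem hasDerivAt_pow_succ_div_factorial {𝕜 : Type*} [NontriviallyNormedField 𝕜] [CharZero 𝕜]
    (k : ℕ) (x : 𝕜) :
    HasDerivAt (fun y => y ^ (k + 1) / ((k + 1)! : 𝕜)) (x ^ k / (k ! : 𝕜)) x := by
  refine ((hasDerivAt_pow (k + 1) x).div_const _).congr_deriv ?_
  have factorial_ne_zero : (k ! : 𝕜) ≠ 0 := mod_cast k.factorial_ne_zero
  have succ_ne_zero : (k + 1 : 𝕜) ≠ 0 := mod_cast k.succ_ne_zero
  rw [Nat.factorial_succ, Nat.add_sub_cancel]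
  push_cast
  field_simp

/-- The integral `∫₀^{π/2} cos^m t · t^k / k! dt`, which moments of powers of `arccos` reduce to
under `x = cos t`. The factor `1 / k!` keeps constants out of the integrations by parts. -/
noncomputable def cosMoment (m k : ℕ) : ℝ :=
  ∫ t in (0 : ℝ)..(π / 2), cos t ^ m * (t ^ k / k !)

theorem intervalIntegrable_cos_pow_mul_pow_div_factorial (m k : ℕ) (a b : ℝ) :
    IntervalIntegrable (fun t => cos t ^ m * (t ^ k / k !)) MeasureTheory.volume a b :=
  Continuous.intervalIntegrable (by fun_prop) a b

theorem cosMoment_zero_right (m : ℕ) : cosMoment m 0 = ∫ t in (0 : ℝ)..(π / 2), cos t ^ m := by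
  simp [cosMoment]

theorem cosMoment_zero_right_pos (m : ℕ) : 0 < cosMoment m 0 := by
  rw [cosMoment_zero_right, EulerSine.integral_cos_pow_eq]
  exact mul_pos one_half_pos (integral_sin_pow_pos m)

theorem cosMoment_nonneg (m k : ℕ) : 0 ≤ cosMoment m k := by
  refine intervalIntegral.integral_nonneg pi_div_two_pos.le fun t ht => ?_
  have cos_nonneg : 0 ≤ cos t :=
    cos_nonneg_of_neg_pi_div_two_le_of_le (by linarith [ht.1, pi_pos]) ht.2
  have t_nonneg : 0 ≤ t := ht.1
  positivity

theorem cosMoment_succ_left (m k : ℕ) :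
    cosMoment (m + 1) k =
      (m + 1) * ∫ t in (0 : ℝ)..(π / 2), cos t ^ m * sin t * (t ^ (k + 1) / (k + 1)!) := by
  have deriv_cos_pow (t : ℝ) :
      HasDerivAt (fun x => cos x ^ (m + 1)) (-((m + 1) * (cos t ^ m * sin t))) t :=
    ((hasDerivAt_cos t).fun_pow (m + 1)).congr_deriv (by push_cast; ring_nf)
  have by_parts := intervalIntegral.integral_mul_deriv_eq_deriv_mul
    (a := 0) (b := π / 2) (fun t _ => deriv_cos_pow t)
    (fun t _ => hasDerivAt_pow_succ_div_factorial k t)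
    (Continuous.intervalIntegrable (by fun_prop) _ _)
    (Continuous.intervalIntegrable (by fun_prop) _ _)
  rw [cosMoment, by_parts, ← intervalIntegral.integral_const_mul]
  simp [mul_assoc]

theorem integral_cos_pow_succ_mul_sin_mul_pow (m k : ℕ) :
    ∫ t in (0 : ℝ)..(π / 2), cos t ^ (m + 1) * sin t * (t ^ (k + 1) / (k + 1)!) =
      (m + 1) * cosMoment m (k + 2) - (m + 2) * cosMoment (m + 2) (k + 2) := by
  have deriv_cos_pow_mul_sin (t : ℝ) : HasDerivAt (fun x => cos x ^ (m + 1) * sin x)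
      ((m + 2) * cos t ^ (m + 2) - (m + 1) * cos t ^ m) t := by
    refine (((hasDerivAt_cos t).fun_pow (m + 1)).fun_mul (hasDerivAt_sin t)).congr_deriv ?_
    rw [Nat.add_sub_cancel]
    push_cast
    linear_combination (-(m + 1) * cos t ^ m) * sin_sq t
  have by_parts := intervalIntegral.integral_mul_deriv_eq_deriv_mul
    (a := 0) (b := π / 2) (fun t _ => deriv_cos_pow_mul_sin t)
    (fun t _ => hasDerivAt_pow_succ_div_factorial (k + 1) t)
    (Continuous.intervalIntegrable (by fun_prop) _ _)
    (Continuous.intervalIntegrable (by fun_prop) _ _)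
  have integrable := fun j => intervalIntegrable_cos_pow_mul_pow_div_factorial j (k + 2) 0 (π / 2)
  rw [by_parts]
  simp only [sub_mul, mul_assoc]
  rw [intervalIntegral.integral_sub ((integrable _).const_mul _) ((integrable _).const_mul _),
    intervalIntegral.integral_const_mul, intervalIntegral.integral_const_mul]
  simp [cosMoment]

theorem cosMoment_add_two_left (m k : ℕ) :
    cosMoment (m + 2) k =
      (m + 2) * (m + 1) * cosMoment m (k + 2) - (m + 2) ^ 2 * cosMoment (m + 2) (k + 2) := by
  rw [cosMoment_succ_left, integral_cos_pow_succ_mul_sin_mul_pow]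
  push_cast
  ring

theorem cosMoment_add_two_zero (m : ℕ) :
    cosMoment (m + 2) 0 = (m + 1) / (m + 2) * cosMoment m 0 := by
  simp [cosMoment_zero_right, integral_cos_pow]

theorem cosMoment_two_mul_add_one_zero (n : ℕ) :
    cosMoment (2 * n + 1) 0 = 4 ^ n / ((2 * n + 1) * n.centralBinom) := by
  induction n with
  | zero => simp [cosMoment]
  | succ n ih =>
    have centralBinom_succ :
        ((n : ℝ) + 1) * (n + 1).centralBinom = 2 * (2 * n + 1) * n.centralBinom :=
      mod_cast n.succ_mul_centralBinom_succ
    have centralBinom_ne_zero : (n.centralBinom : ℝ) ≠ 0 := mod_cast n.centralBinom_ne_zero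
    have centralBinom_succ_ne_zero : ((n + 1).centralBinom : ℝ) ≠ 0 :=
      mod_cast (n + 1).centralBinom_ne_zero
    rw [show 2 * (n + 1) + 1 = 2 * n + 1 + 2 by ring, cosMoment_add_two_zero, ih]
    push_cast
    field_simp
    linear_combination 4 ^ n * (2 * n + 3) * 2 * centralBinom_succ

theorem pow_add_two_div_factorial_le_sin_sq (k : ℕ) {t : ℝ} (ht : t ∈ Set.Icc 0 (π / 2)) :
    t ^ (k + 2) / (k + 2)! ≤ (π / 2) ^ (k + 2) * sin t ^ 2 := by
  obtain ⟨t_nonneg, t_le⟩ := ht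
  have le_mul_sin : t ≤ π / 2 * sin t := by
    have := mul_le_sin t_nonneg t_le
    field_simp at this ⊢
    linarith
  calc t ^ (k + 2) / (k + 2)! ≤ t ^ (k + 2) :=
        div_le_self (by positivity) (mod_cast (k + 2).factorial_pos)
    _ = t ^ k * t ^ 2 := pow_add t k 2
    _ ≤ (π / 2) ^ k * (π / 2 * sin t) ^ 2 := by gcongr
    _ = (π / 2) ^ (k + 2) * sin t ^ 2 := by ring

theorem cosMoment_add_two_right_le (m k : ℕ) :
    cosMoment m (k + 2) ≤ (π / 2) ^ (k + 2) * (cosMoment m 0 - cosMoment (m + 2) 0) := by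
  have integrable (j : ℕ) :
      IntervalIntegrable (fun t => cos t ^ j) MeasureTheory.volume 0 (π / 2) :=
    Continuous.intervalIntegrable (by fun_prop) _ _
  rw [cosMoment_zero_right, cosMoment_zero_right,
    ← intervalIntegral.integral_sub (integrable _) (integrable _),
    ← intervalIntegral.integral_const_mul]
  refine intervalIntegral.integral_mono_on pi_div_two_pos.le
    (intervalIntegrable_cos_pow_mul_pow_div_factorial _ _ _ _)
    (((integrable _).sub (integrable _)).const_mul _) fun t ht => ?_
  have cos_nonneg : 0 ≤ cos t :=
    cos_nonneg_of_neg_pi_div_two_le_of_le (by linarith [ht.1, pi_pos]) ht.2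
  calc cos t ^ m * (t ^ (k + 2) / (k + 2)!)
      ≤ cos t ^ m * ((π / 2) ^ (k + 2) * sin t ^ 2) := by
        gcongr
        exact pow_add_two_div_factorial_le_sin_sq k ht
    _ = (π / 2) ^ (k + 2) * (cos t ^ m - cos t ^ (m + 2)) := by
        rw [sin_sq]
        ring

/-- `cosMoment m k` divided by `cosMoment m 0`, i.e. the mean of `t ^ k / k!` for the probability
density proportional to `cos t ^ m` on `[0, π / 2]`. With this normalization the recurrence in `m`
telescopes. -/
noncomputable def cosMean (m k : ℕ) : ℝ := cosMoment m k / cosMoment m 0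

theorem cosMean_zero_right (m : ℕ) : cosMean m 0 = 1 := div_self (cosMoment_zero_right_pos m).ne'

theorem cosMean_nonneg (m k : ℕ) : 0 ≤ cosMean m k :=
  div_nonneg (cosMoment_nonneg m k) (cosMoment_nonneg m 0)

theorem cosMean_sub_cosMean_add_two (m k : ℕ) :
    cosMean m (k + 2) - cosMean (m + 2) (k + 2) = 1 / (m + 2) ^ 2 * cosMean (m + 2) k := by
  have cosMoment_ne_zero : cosMoment m 0 ≠ 0 := (cosMoment_zero_right_pos m).ne'
  rw [cosMean, cosMean, cosMean, cosMoment_add_two_left m k, cosMoment_add_two_zero]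
  field_simp

theorem cosMean_add_two_right_le (m k : ℕ) :
    cosMean m (k + 2) ≤ (π / 2) ^ (k + 2) / (m + 2) := by
  rw [cosMean, div_le_iff₀ (cosMoment_zero_right_pos m)]
  refine (cosMoment_add_two_right_le m k).trans_eq ?_
  rw [cosMoment_add_two_zero]
  field_simp
  ring

theorem tendsto_cosMean_atTop (k : ℕ) :
    Tendsto (fun m => cosMean m (k + 2)) atTop (𝓝 0) := by
  refine squeeze_zero (cosMean_nonneg · _) (cosMean_add_two_right_le · k) ?_
  exact tendsto_const_nhds.div_atTop
    (tendsto_atTop_add_const_right _ _ tendsto_natCast_atTop_atTop)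

theorem hasSum_cosMean_Ioi (c n k : ℕ) :
    HasSum (fun j : Set.Ioi n => 1 / (2 * (j : ℕ) + c : ℝ) ^ 2 * cosMean (2 * j + c) k)
      (cosMean (2 * n + c) (k + 2)) := by
  refine hasSum_Ioi_of_sub_succ_eq (u := fun j => cosMean (2 * j + c) (k + 2))
    (v := fun j => 1 / (2 * (j : ℕ) + c : ℝ) ^ 2 * cosMean (2 * j + c) k)
    (fun j => mul_nonneg (by positivity) (cosMean_nonneg _ _)) (fun j => ?_) ?_ n
  · rw [show 2 * (j + 1) + c = 2 * j + c + 2 by ring, cosMean_sub_cosMean_add_two]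
    push_cast
    ring_nf
  · have tendsto_index : Tendsto (fun j : ℕ => 2 * j + c) atTop atTop :=
      tendsto_atTop_mono (fun j => show j ≤ 2 * j + c by lia) tendsto_id
    exact (tendsto_cosMean_atTop k).comp tendsto_index

theorem hasSum_prod_cosMean (c n b : ℕ) :
    HasSum (fun f : IncreasingTuple b n => ∏ i, 1 / (2 * (f.1 i : ℝ) + c) ^ 2)
      (cosMean (2 * n + c) (2 * b)) :=
  IncreasingTuple.hasSum_prod_of_hasSum_Ioi
    (w := fun j : ℕ => 1 / (2 * (j : ℝ) + c) ^ 2) (s := fun b n => cosMean (2 * n + c) (2 * b))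
    (fun _ => by positivity) (fun _ => cosMean_zero_right _)
    (fun b n => hasSum_cosMean_Ioi c n (2 * b)) b n

theorem integral_comp_arccos {f : ℝ → ℝ → ℝ} (hf : Continuous ↿f) :
    ∫ x in (0 : ℝ)..1, f x (arccos x) = ∫ t in (0 : ℝ)..(π / 2), f (cos t) t * sin t := by
  have substitution := intervalIntegral.integral_comp_mul_deriv (a := π / 2) (b := 0)
    (f := cos) (f' := fun t => -sin t) (g := fun x => f x (arccos x))
    (fun t _ => hasDerivAt_cos t) (by fun_prop)
    (hf.comp (continuous_id.prodMk continuous_arccos))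
  rw [cos_pi_div_two, cos_zero] at substitution
  rw [← substitution, intervalIntegral.integral_symm, ← intervalIntegral.integral_neg]
  refine intervalIntegral.integral_congr fun t ht => ?_
  rw [Set.uIcc_of_le pi_div_two_pos.le] at ht
  simp [arccos_cos ht.1 (by linarith [ht.2, pi_pos])]

theorem integral_pow_mul_arccos_pow (m k : ℕ) :
    ∫ x in (0 : ℝ)..1, x ^ m * (arccos x ^ (k + 1) / (k + 1)!) =
      cosMoment (m + 1) k / (m + 1) := by
  rw [integral_comp_arccos (f := fun x y => x ^ m * (y ^ (k + 1) / (k + 1)!))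
    (by fun_prop), cosMoment_succ_left, mul_div_cancel_left₀ _ (by positivity)]
  simp only [mul_right_comm]

theorem arccos_even_moments_general (c n b : ℕ) :
    ∫ x in (0 : ℝ)..1, x ^ (2 * n + c) * (arccos x ^ (2 * b + 1) / (2 * b + 1)!) =
      (∫ t in (0 : ℝ)..(π / 2), cos t ^ (2 * n + c + 1)) / (2 * n + c + 1) *
        ∑' f : IncreasingTuple b n, ∏ i, 1 / (2 * (f.1 i : ℝ) + c + 1) ^ 2 := by
  have tsum_eq := (hasSum_prod_cosMean (c + 1) n b).tsum_eq
  have cosMoment_ne_zero := (cosMoment_zero_right_pos (2 * n + c + 1)).ne'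
  push_cast [← add_assoc] at tsum_eq
  rw [integral_pow_mul_arccos_pow, ← cosMoment_zero_right, tsum_eq, cosMean]
  push_cast
  field_simp

theorem arccos_even_moments (n b : ℕ) :
    (∫ x in (0:ℝ)..1, x ^ (2 * n) *
        (Real.arccos x ^ (2 * b + 1) / (Nat.factorial (2 * b + 1)))) =
      4 ^ n / ((2 * (n : ℝ) + 1) ^ 2 * (Nat.choose (2 * n) n : ℝ)) * tTail b n := by
  have moment := arccos_even_moments_general 0 n b
  rw [add_zero, ← cosMoment_zero_right, cosMoment_two_mul_add_one_zero] at moment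
  simp only [Nat.cast_zero, add_zero] at moment
  rw [moment, tTail, Nat.centralBinom, div_div]
  ring
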